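/- Let m ≥ 1 and let A ∈ ℂ[t] be a polynomial of degree 2m having exactly m roots (with multiplicity) in the open upper half-plane ℂ₊ and exactly m roots in the open lower half-plane ℂ₋. Let s ∈ {0, m}. Then for every h = (h₁,…,h_m) ∈ ℂ^m there exists exactly one smooth function v : [0,∞) → ℂ with A(D_n)v = 0 on (0,∞), D_n^{s+j−1}v(0) = h_j for j = 1,…,m, and v(x_n) → 0 as x_n → ∞. (For s = 0 these are the generalized Dirichlet conditions, for s = m the generalized Neumann conditions; both are absolutely elliptic at the ODE level.) -/

import Mathlib

noncomputable section
open Complex Filter Set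

/-- `P(D_n) u` at `x`, where `D_n = -i d/dx` and `P` is a polynomial. -/
def polyOp (P : Polynomial ℂ) (u : ℝ → ℂ) (x : ℝ) : ℂ :=
  ∑ k ∈ Finset.range (P.natDegree + 1), P.coeff k * ((-Complex.I) ^ k * iteratedDeriv k u x)

/-- Solution predicate: `v` is a stable solution of `A(D_n)v = 0` on `(0,∞)` with boundary
conditions `D_n^{s+j-1} v(0) = h_j` for `j = 1,…,m` and `v(x_n) → 0` as `x_n → ∞`. -/
def BVPSol (m s : ℕ) (A : Polynomial ℂ) (h : Fin m → ℂ) (v : ℝ → ℂ) : Prop :=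
  ContDiff ℝ (⊤ : ℕ∞) v ∧
  (∀ x : ℝ, 0 < x → polyOp A v x = 0) ∧
  (∀ j : Fin m, (-Complex.I) ^ (s + (j : ℕ)) * iteratedDeriv (s + (j : ℕ)) v 0 = h j) ∧
  Tendsto v atTop (nhds 0)

/-
Write `A = U L`, where `U` collects the `m` roots in `ℂ₊` and `L` the others. Solutions of
`U(D_n) v = 0` decay exponentially. A decaying solution of `L(D_n) v = 0` vanishes on the half-line:
each root `z` of `L` makes `v(x + 1) - e^{iz} v(x)` a decaying solution for the remaining roots,
hence zero by induction, and `|e^{iz}| ≥ 1` is incompatible with decay. Since `U` and `L` are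
coprime, every solution of `A(D_n) v = 0` splits into the two kinds, so the decaying ones are
exactly the solutions of `U(D_n) v = 0`. As `0` is not a root of `U`, the operator `D_n^s` is
invertible on that space, which reduces the boundary conditions to Cauchy data of order `< m`.
-/

open Polynomial Topology
open scoped ContDiff

/-! ### Polynomials and endomorphisms -/

theorem induction_on_linear_factors {K : Type*} [Field K] [IsAlgClosed K]
    {motive : (P : K[X]) → P ≠ 0 → Prop}
    (const : ∀ a (ha : a ≠ 0), motive (C a) (C_ne_zero.2 ha))
    (linear_mul : ∀ z Q (hQ : Q ≠ 0), motive Q hQ →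
      motive ((X - C z) * Q) (mul_ne_zero (X_sub_C_ne_zero z) hQ))
    (P : K[X]) (hP : P ≠ 0) : motive P hP := by
  have hprod (S : Multiset K) : ∃ hS, motive (C P.leadingCoeff * (S.map (X - C ·)).prod) hS := by
    induction S using Multiset.induction_on with
    | empty => simpa using ⟨hP, const _ (leadingCoeff_ne_zero.2 hP)⟩
    | cons z S ih =>
      rw [Multiset.map_cons, Multiset.prod_cons, mul_left_comm]
      exact ⟨_, linear_mul z _ ih.1 ih.2⟩
  have hroots := hprod P.roots
  rw [← (IsAlgClosed.splits P).eq_prod_roots] at hroots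
  exact hroots.2

theorem forall_isRoot_X_sub_C_mul_iff {R : Type*} [CommRing R] [IsDomain R] {p : R → Prop} {z : R}
    {Q : R[X]} : (∀ w, ((X - C z) * Q).IsRoot w → p w) ↔ p z ∧ ∀ w, Q.IsRoot w → p w := by
  simp only [root_mul, root_X_sub_C, or_imp, forall_and, forall_eq']

theorem natDegree_X_sub_C_mul {R : Type*} [CommRing R] [IsDomain R] (z : R) {Q : R[X]}
    (hQ : Q ≠ 0) : ((X - C z) * Q).natDegree = Q.natDegree + 1 := by
  rw [natDegree_mul (X_sub_C_ne_zero z) hQ, natDegree_X_sub_C, add_comm]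

theorem isCoprime_X_pow_of_not_isRoot {K : Type*} [Field K] {P : K[X]} (hP : ¬ P.IsRoot 0) (s : ℕ) :
    IsCoprime (X ^ s) P := by
  refine IsCoprime.pow_left ((irreducible_X.coprime_iff_not_dvd).2 ?_)
  rwa [X_dvd_iff, coeff_zero_eq_eval_zero]

theorem exists_mul_eq_and_forall_isRoot_of_splits {K : Type*} [Field K] {A : K[X]}
    (hA : A.Splits) (hA0 : A ≠ 0) (p : K → Prop) [DecidablePred p] :
    ∃ U L : K[X], U * L = A ∧ U.natDegree = (A.roots.filter p).card ∧
      (∀ z, U.IsRoot z → p z) ∧ ∀ z, L.IsRoot z → ¬ p z := by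
  have hroots (q : K → Prop) [DecidablePred q] (z : K)
      (hz : ((A.roots.filter q).map (X - C ·)).prod.IsRoot z) : q z := by
    rw [← mem_roots (monic_multiset_prod_of_monic _ _ fun w _ => monic_X_sub_C w).ne_zero,
      roots_multiset_prod_X_sub_C] at hz
    exact (Multiset.mem_filter.1 hz).2
  refine ⟨((A.roots.filter p).map (X - C ·)).prod,
    C A.leadingCoeff * ((A.roots.filter (¬ p ·)).map (X - C ·)).prod, ?_,
    natDegree_multiset_prod_X_sub_C_eq_card _, hroots p, fun z hz => hroots (¬ p ·) z ?_⟩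
  · rw [mul_left_comm, ← Multiset.prod_add, ← Multiset.map_add, Multiset.filter_add_not,
      ← hA.eq_prod_roots]
  · exact (root_mul.1 hz).resolve_left (not_isRoot_C _ _ (leadingCoeff_ne_zero.2 hA0))

section Endomorphism

variable {R M : Type*} [CommRing R] [AddCommGroup M] [Module R M] (f : Module.End R M)

theorem aeval_mul_apply (P Q : R[X]) (v : M) : aeval f (P * Q) v = aeval f P (aeval f Q v) := by
  rw [map_mul, Module.End.mul_apply]

theorem aeval_X_sub_C_apply (z : R) (v : M) : aeval f (X - C z) v = f v - z • v := by
  rw [map_sub, aeval_X, aeval_C, LinearMap.sub_apply, Module.algebraMap_end_apply]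

variable {f}

theorem aeval_apply_comm_of_commute {g : Module.End R M} (hfg : Commute f g) (P : R[X]) (v : M) :
    aeval f P (g v) = g (aeval f P v) :=
  LinearMap.congr_fun (Algebra.commute_of_mem_adjoin_singleton_of_commute
    (aeval_mem_adjoin_singleton R f) hfg.symm).symm.eq v

theorem aeval_mul_mem {N : Submodule R M} (hN : N ≤ N.comap f) (Q : R[X]) {P : R[X]} {v : M}
    (hv : aeval f P v ∈ N) : aeval f (Q * P) v ∈ N := by
  rw [aeval_mul_apply]
  exact aeval_apply_smul_mem_of_le_comap hv Q f hN

theorem mem_of_isCoprime_of_aeval_mem {N : Submodule R M} (hN : N ≤ N.comap f) {P Q : R[X]}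
    (hPQ : IsCoprime P Q) {v : M} (hP : aeval f P v ∈ N) (hQ : aeval f Q v ∈ N) : v ∈ N := by
  obtain ⟨a, b, hab⟩ := hPQ
  have hv : aeval f (a * P) v + aeval f (b * Q) v = v := by
    rw [← LinearMap.add_apply, ← map_add, hab, map_one, Module.End.one_apply]
  rw [← hv]
  exact N.add_mem (aeval_mul_mem hN a hP) (aeval_mul_mem hN b hQ)

theorem exists_aeval_eq_of_isCoprime {P Q : R[X]} (hPQ : IsCoprime P Q) {w : M}
    (hw : aeval f Q w = 0) : ∃ v, aeval f P v = w ∧ aeval f Q v = 0 := by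
  obtain ⟨a, b, hab⟩ := hPQ
  refine ⟨aeval f a w, ?_, ?_⟩
  · rw [← aeval_mul_apply, mul_comm, eq_sub_of_add_eq hab, map_sub, LinearMap.sub_apply,
      aeval_mul_apply, hw, map_zero, sub_zero, map_one, Module.End.one_apply]
  · rw [← aeval_mul_apply, mul_comm, aeval_mul_apply, hw, map_zero]

theorem exists_add_eq_of_isCoprime {N : Submodule R M} (hN : N ≤ N.comap f) {P Q : R[X]}
    (hPQ : IsCoprime P Q) {v : M} (hv : aeval f (P * Q) v ∈ N) :
    ∃ p q, p + q = v ∧ aeval f P p ∈ N ∧ aeval f Q q ∈ N := by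
  obtain ⟨a, b, hab⟩ := hPQ
  refine ⟨aeval f (b * Q) v, aeval f (a * P) v, ?_, ?_, ?_⟩
  · rw [← LinearMap.add_apply, ← map_add, add_comm, hab, map_one, Module.End.one_apply]
  · rw [← aeval_mul_apply, mul_left_comm]
    exact aeval_mul_mem hN b hv
  · rw [← aeval_mul_apply, mul_left_comm, mul_comm Q]
    exact aeval_mul_mem hN a hv

end Endomorphism

/-! ### Exponentials and primitives -/

theorem hasDerivAt_exp_mul_ofReal (c : ℂ) (x : ℝ) :
    HasDerivAt (fun x : ℝ => exp (c * x)) (c * exp (c * x)) x := by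
  simpa [mul_comm] using ((hasDerivAt_id x).ofReal_comp.const_mul c).cexp

theorem norm_exp_mul_ofReal (c : ℂ) (x : ℝ) : ‖exp (c * x)‖ = Real.exp (c.re * x) := by
  rw [norm_exp, re_mul_ofReal]

theorem exp_mul_exp_neg_mul_cancel (c w : ℂ) (x : ℝ) :
    exp (c * x) * (exp (-c * x) * w) = w := by
  rw [← mul_assoc, ← exp_add, ← add_mul, add_neg_cancel, zero_mul, exp_zero, one_mul]

theorem contDiff_exp_mul_ofReal (c : ℂ) : ContDiff ℝ ∞ fun x : ℝ => exp (c * x) :=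
  (contDiff_const.mul ofRealCLM.contDiff).cexp

theorem contDiff_integral {E : Type*} [NormedAddCommGroup E] [NormedSpace ℝ E] [CompleteSpace E]
    {p : ℝ → E} (hp : ContDiff ℝ ∞ p) (a : ℝ) :
    ContDiff ℝ ∞ fun x => ∫ t in a..x, p t := by
  have hderiv (x : ℝ) : HasDerivAt (fun x => ∫ t in a..x, p t) (p x) x :=
    (hp.continuous.integral_hasStrictDerivAt a x).hasDerivAt
  rw [contDiff_infty_iff_deriv, funext fun x => (hderiv x).deriv]
  exact ⟨fun x => (hderiv x).differentiableAt, hp⟩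

/-! ### The operator `D_n` on smooth functions -/

/-- The space `C^∞(ℝ, ℂ)`, on which polynomials in `D_n` act as endomorphisms. -/
def smoothFunctions : Submodule ℂ (ℝ → ℂ) where
  carrier := {v | ContDiff ℝ ∞ v}
  add_mem' {a b} (ha : ContDiff ℝ ∞ a) (hb : ContDiff ℝ ∞ b) := ha.add hb
  zero_mem' := show ContDiff ℝ ∞ (fun _ => 0) from contDiff_const
  smul_mem' c v (hv : ContDiff ℝ ∞ v) := hv.const_smul c

instance : CoeFun smoothFunctions fun _ => ℝ → ℂ := ⟨Subtype.val⟩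

namespace smoothFunctions

theorem contDiff (v : smoothFunctions) : ContDiff ℝ ∞ v := v.2

theorem differentiable (v : smoothFunctions) : Differentiable ℝ v :=
  (contDiff v).differentiable (by simp)

/-- The operator `D_n = -i d/dx_n`; the polynomial operator `A(D_n)` is `aeval Dₙ A`. -/
def Dₙ : Module.End ℂ smoothFunctions where
  toFun v := ⟨fun x => -I * deriv v x, contDiff_const.mul (contDiff_infty_iff_deriv.1 v.2).2⟩
  map_add' a b := by
    ext x
    exact (congrArg (-I * ·) (deriv_add (differentiable a x) (differentiable b x))).trans
      (mul_add _ _ _)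
  map_smul' c a := by
    ext x
    exact (congrArg (-I * ·) (deriv_const_smul c (differentiable a x))).trans
      (mul_left_comm _ _ _)

theorem Dₙ_apply (v : smoothFunctions) (x : ℝ) : Dₙ v x = -I * deriv v x := rfl

theorem Dₙ_pow_apply (k : ℕ) (v : smoothFunctions) (x : ℝ) :
    (Dₙ ^ k) v x = (-I) ^ k * iteratedDeriv k v x := by
  induction k generalizing x with
  | zero => simp
  | succ k ih =>
    have hdiff : DifferentiableAt ℝ (iteratedDeriv k v) x :=
      (contDiff v).differentiable_iteratedDeriv k (by exact_mod_cast WithTop.coe_lt_top _) x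
    rw [pow_succ', Module.End.mul_apply, Dₙ_apply, iteratedDeriv_succ, funext ih,
      deriv_const_mul _ hdiff, pow_succ']
    ring

theorem aeval_Dₙ_apply (P : ℂ[X]) (v : smoothFunctions) (x : ℝ) :
    aeval Dₙ P v x = ∑ k ∈ Finset.range (P.natDegree + 1), P.coeff k * (Dₙ ^ k) v x := by
  rw [aeval_eq_sum_range, LinearMap.sum_apply]
  simp [Finset.sum_apply]

theorem polyOp_eq_aeval (P : ℂ[X]) (v : smoothFunctions) (x : ℝ) :
    polyOp P v x = aeval Dₙ P v x := by
  simp only [aeval_Dₙ_apply, Dₙ_pow_apply, polyOp]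

theorem aeval_Dₙ_X_sub_C_apply (z : ℂ) (v : smoothFunctions) (x : ℝ) :
    aeval Dₙ (X - C z) v x = -I * deriv v x - z * v x := by
  rw [aeval_X_sub_C_apply]
  rfl

/-- The smooth functions that are zero on `[0, ∞)`; two functions solve the same half-line problem
as soon as they agree modulo this subspace. -/
def vanishingOnHalfLine : Submodule ℂ smoothFunctions where
  carrier := {v | ∀ x : ℝ, 0 ≤ x → v x = 0}
  add_mem' {a b} ha hb x hx := by
    change a x + b x = 0
    rw [ha x hx, hb x hx, add_zero]
  zero_mem' _ _ := rfl
  smul_mem' c a ha x hx := by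
    change c * a x = 0
    rw [ha x hx, mul_zero]

theorem mem_vanishingOnHalfLine_iff_forall_pos {v : smoothFunctions} :
    v ∈ vanishingOnHalfLine ↔ ∀ x : ℝ, 0 < x → v x = 0 := by
  refine ⟨fun hv x hx => hv x hx.le, fun hv => ?_⟩
  have h : EqOn v 0 (closure (Ioi 0)) :=
    EqOn.closure (fun x hx => hv x hx) (contDiff v).continuous continuous_const
  rw [closure_Ioi] at h
  exact fun x hx => h hx

theorem vanishingOnHalfLine_le_comap_Dₙ :
    vanishingOnHalfLine ≤ vanishingOnHalfLine.comap Dₙ := by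
  intro v hv
  refine mem_vanishingOnHalfLine_iff_forall_pos.2 fun x hx => ?_
  have h : v =ᶠ[𝓝 x] fun _ => (0 : ℂ) := by
    filter_upwards [Ioi_mem_nhds hx] with y hy using hv y (le_of_lt hy)
  rw [Dₙ_apply, h.deriv_eq, deriv_const, mul_zero]

theorem mem_vanishingOnHalfLine_of_aeval_C_mem {a : ℂ} (ha : a ≠ 0) {v : smoothFunctions}
    (hv : aeval Dₙ (C a) v ∈ vanishingOnHalfLine) : v ∈ vanishingOnHalfLine := by
  rwa [aeval_C, Module.algebraMap_end_apply, Submodule.smul_mem_iff _ ha] at hv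

/-! ### First-order equations -/

-- The integrating factor `e^{-izx}` turns `D_n - z` into `D_n`.
theorem hasDerivAt_exp_neg_mul (z : ℂ) (v : smoothFunctions) (x : ℝ) :
    HasDerivAt (fun x : ℝ => exp (-(I * z) * x) * v x)
      (exp (-(I * z) * x) * (I * aeval Dₙ (X - C z) v x)) x := by
  refine ((hasDerivAt_exp_mul_ofReal (-(I * z)) x).mul
    (differentiable v x).hasDerivAt).congr_deriv ?_
  rw [aeval_Dₙ_X_sub_C_apply]
  linear_combination (exp (-(I * z) * x) * deriv v x) * I_sq

theorem eq_exp_mul_of_aeval_X_sub_C_mem {z : ℂ} {v : smoothFunctions}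
    (hv : aeval Dₙ (X - C z) v ∈ vanishingOnHalfLine) {x : ℝ} (hx : 0 ≤ x) :
    v x = exp (I * z * x) * v 0 := by
  have hconst : exp (-(I * z) * x) * v x = exp (-(I * z) * (0 : ℝ)) * v 0 := by
    refine constant_of_has_deriv_right_zero (f := fun x : ℝ => exp (-(I * z) * x) * v x)
      (fun y _ => (hasDerivAt_exp_neg_mul z v y).continuousAt.continuousWithinAt)
      (fun y hy => ?_) x (right_mem_Icc.2 hx)
    have hderiv := hasDerivAt_exp_neg_mul z v y
    rw [hv y hy.1, mul_zero, mul_zero] at hderiv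
    exact hderiv.hasDerivWithinAt
  rw [ofReal_zero, mul_zero, exp_zero, one_mul] at hconst
  rw [← hconst, exp_mul_exp_neg_mul_cancel]

theorem exists_aeval_X_sub_C_eq (z c : ℂ) (f : smoothFunctions) :
    ∃ g : smoothFunctions, aeval Dₙ (X - C z) g = f ∧ g 0 = c := by
  let p : ℝ → ℂ := fun t => exp (-(I * z) * t) * f t
  have hpsmooth : ContDiff ℝ ∞ p := (contDiff_exp_mul_ofReal _).mul (contDiff f)
  -- Duhamel's formula
  let g : smoothFunctions := ⟨fun x => exp (I * z * x) * (c + I * ∫ t in (0 : ℝ)..x, p t),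
    (contDiff_exp_mul_ofReal _).mul
      (contDiff_const.add (contDiff_const.mul (contDiff_integral hpsmooth 0)))⟩
  refine ⟨g, ?_, by simp [g]⟩
  ext x
  have hint : HasDerivAt (fun x => ∫ t in (0 : ℝ)..x, p t) (p x) x :=
    (hpsmooth.continuous.integral_hasStrictDerivAt 0 x).hasDerivAt
  have hg : deriv g x = I * z * exp (I * z * x) * (c + I * ∫ t in (0 : ℝ)..x, p t) +
      exp (I * z * x) * (I * p x) :=
    ((hasDerivAt_exp_mul_ofReal (I * z) x).mul ((hint.const_mul I).const_add c)).deriv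
  have hcancel : exp (I * z * x) * p x = f x := exp_mul_exp_neg_mul_cancel (I * z) (f x) x
  rw [aeval_Dₙ_X_sub_C_apply, hg]
  change _ - z * (exp (I * z * x) * (c + I * ∫ t in (0 : ℝ)..x, p t)) = f x
  linear_combination hcancel - (z * (exp (I * z * x) * (c + I * ∫ t in (0 : ℝ)..x, p t)) +
    exp (I * z * x) * p x) * I_sq

theorem norm_le_mul_exp_of_aeval_X_sub_C {z : ℂ} {c K : ℝ} (hc : c < z.im) {v : smoothFunctions}
    (hv : ∀ x : ℝ, 0 ≤ x → ‖aeval Dₙ (X - C z) v x‖ ≤ K * Real.exp (-c * x))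
    {x : ℝ} (hx : 0 ≤ x) :
    ‖v x‖ ≤ (‖v 0‖ + K / (z.im - c)) * Real.exp (-c * x) := by
  have hgap : 0 < z.im - c := sub_pos.2 hc
  have hK : 0 ≤ K := by simpa using (norm_nonneg _).trans (hv 0 le_rfl)
  have hnorm (y : ℝ) : ‖exp (-(I * z) * y)‖ = Real.exp (z.im * y) := by
    rw [norm_exp_mul_ofReal, neg_re, I_mul_re, neg_neg]
  have hderiv_le (y : ℝ) (hy : 0 ≤ y) : ‖exp (-(I * z) * y) * (I * aeval Dₙ (X - C z) v y)‖ ≤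
      (‖v 0‖ + K / (z.im - c)) * ((z.im - c) * Real.exp ((z.im - c) * y)) := calc
    _ = Real.exp (z.im * y) * ‖aeval Dₙ (X - C z) v y‖ := by
      rw [norm_mul, norm_mul, hnorm, norm_I, one_mul]
    _ ≤ Real.exp (z.im * y) * (K * Real.exp (-c * y)) := by gcongr; exact hv y hy
    _ = K / (z.im - c) * ((z.im - c) * Real.exp ((z.im - c) * y)) := by
      rw [mul_left_comm, ← Real.exp_add, ← mul_assoc, div_mul_cancel₀ _ hgap.ne']
      ring_nf
    _ ≤ _ := by gcongr; exact le_add_of_nonneg_left (norm_nonneg _)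
  have htwist : ‖exp (-(I * z) * x) * v x‖ ≤
      (‖v 0‖ + K / (z.im - c)) * Real.exp ((z.im - c) * x) := by
    refine image_norm_le_of_norm_deriv_right_le_deriv_boundary (a := 0) (b := x)
      (f := fun x : ℝ => exp (-(I * z) * x) * v x)
      (B := fun y => (‖v 0‖ + K / (z.im - c)) * Real.exp ((z.im - c) * y))
      (fun y _ => (hasDerivAt_exp_neg_mul z v y).continuousAt.continuousWithinAt)
      (fun y _ => (hasDerivAt_exp_neg_mul z v y).hasDerivWithinAt) ?_
      (fun y => ?_) (fun y hy => hderiv_le y hy.1) (right_mem_Icc.2 hx)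
    · simpa using by positivity
    · simpa [mul_comm] using (((hasDerivAt_id y).const_mul (z.im - c)).exp).const_mul
        (‖v 0‖ + K / (z.im - c))
  calc ‖v x‖ = ‖exp (I * z * x)‖ * ‖exp (-(I * z) * x) * v x‖ := by
        rw [← norm_mul, exp_mul_exp_neg_mul_cancel]
    _ ≤ Real.exp (-z.im * x) * ((‖v 0‖ + K / (z.im - c)) * Real.exp ((z.im - c) * x)) := by
        rw [norm_exp_mul_ofReal, I_mul_re]; gcongr
    _ = (‖v 0‖ + K / (z.im - c)) * Real.exp (-c * x) := by
        rw [mul_left_comm, ← Real.exp_add]; ring_nf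

/-! ### The initial value problem -/

theorem exists_aeval_eq_and_initial_eq {P : ℂ[X]} (hP : P ≠ 0) (f : smoothFunctions) (h : ℕ → ℂ) :
    ∃ v : smoothFunctions, aeval Dₙ P v = f ∧ ∀ j < P.natDegree, (Dₙ ^ j) v 0 = h j := by
  induction P, hP using induction_on_linear_factors generalizing f with
  | const a ha =>
    refine ⟨a⁻¹ • f, ?_, by simp⟩
    rw [aeval_C, Module.algebraMap_end_apply, smul_inv_smul₀ ha]
  | linear_mul z Q hQ ih =>
    obtain ⟨g, hg, hg0⟩ := exists_aeval_X_sub_C_eq z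
      (∑ k ∈ Finset.range (Q.natDegree + 1), Q.coeff k * h k) f
    obtain ⟨v, hv, hv0⟩ := ih g
    refine ⟨v, by rw [aeval_mul_apply, hv, hg], fun j hj => ?_⟩
    rw [natDegree_X_sub_C_mul z hQ] at hj
    rcases Nat.lt_succ_iff_lt_or_eq.1 hj with hj | rfl
    · exact hv0 j hj
    -- the value `g 0` was chosen so as to force the top derivative of `v`
    · rw [← hv, aeval_Dₙ_apply, Finset.sum_range_succ, Finset.sum_range_succ,
        Finset.sum_congr rfl fun k hk => by rw [hv0 k (Finset.mem_range.1 hk)]] at hg0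
      exact mul_left_cancel₀ (leadingCoeff_ne_zero.2 hQ) (add_left_cancel hg0)

theorem mem_vanishingOnHalfLine_of_initial_eq_zero {P : ℂ[X]} (hP : P ≠ 0) {v : smoothFunctions}
    (hv : aeval Dₙ P v ∈ vanishingOnHalfLine) (h0 : ∀ j < P.natDegree, (Dₙ ^ j) v 0 = 0) :
    v ∈ vanishingOnHalfLine := by
  induction P, hP using induction_on_linear_factors with
  | const a ha => exact mem_vanishingOnHalfLine_of_aeval_C_mem ha hv
  | linear_mul z Q hQ ih =>
    rw [aeval_mul_apply] at hv
    rw [natDegree_X_sub_C_mul z hQ] at h0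
    have hQ0 : aeval Dₙ Q v 0 = 0 := by
      rw [aeval_Dₙ_apply]
      exact Finset.sum_eq_zero fun k hk => by rw [h0 k (Finset.mem_range.1 hk), mul_zero]
    refine ih (fun x hx => ?_) fun j hj => h0 j (hj.trans (Nat.lt_succ_self _))
    rw [eq_exp_mul_of_aeval_X_sub_C_mem hv hx, hQ0, mul_zero]

theorem exists_aeval_eq_zero_and_shifted_initial_eq {P : ℂ[X]} (hP0 : ¬ P.IsRoot 0) (s : ℕ)
    (h : ℕ → ℂ) :
    ∃ v : smoothFunctions, aeval Dₙ P v = 0 ∧ ∀ j < P.natDegree, (Dₙ ^ (s + j)) v 0 = h j := by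
  have hP : P ≠ 0 := by rintro rfl; exact hP0 eval_zero
  obtain ⟨w, hw, hwh⟩ := exists_aeval_eq_and_initial_eq hP 0 h
  obtain ⟨v, hvw, hv⟩ := exists_aeval_eq_of_isCoprime (isCoprime_X_pow_of_not_isRoot hP0 s) hw
  refine ⟨v, hv, fun j hj => ?_⟩
  rw [aeval_X_pow] at hvw
  rw [add_comm, pow_add, Module.End.mul_apply, hvw, hwh j hj]

theorem mem_vanishingOnHalfLine_of_shifted_initial_eq_zero {P : ℂ[X]} (hP0 : ¬ P.IsRoot 0) (s : ℕ)
    {v : smoothFunctions} (hv : aeval Dₙ P v ∈ vanishingOnHalfLine)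
    (h0 : ∀ j < P.natDegree, (Dₙ ^ (s + j)) v 0 = 0) : v ∈ vanishingOnHalfLine := by
  have hP : P ≠ 0 := by rintro rfl; exact hP0 eval_zero
  refine mem_of_isCoprime_of_aeval_mem vanishingOnHalfLine_le_comap_Dₙ
    (isCoprime_X_pow_of_not_isRoot hP0 s) ?_ hv
  refine mem_vanishingOnHalfLine_of_initial_eq_zero hP ?_ fun j hj => ?_
  · rw [← aeval_mul_apply, mul_comm]
    exact aeval_mul_mem vanishingOnHalfLine_le_comap_Dₙ _ hv
  · rw [aeval_X_pow, ← Module.End.mul_apply, ← pow_add, add_comm, h0 j hj]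

/-! ### Decay of solutions -/

theorem exists_norm_le_mul_exp {P : ℂ[X]} (hP : P ≠ 0) {c : ℝ}
    (hroots : ∀ z, P.IsRoot z → c < z.im) {v : smoothFunctions}
    (hv : aeval Dₙ P v ∈ vanishingOnHalfLine) :
    ∃ K : ℝ, ∀ x : ℝ, 0 ≤ x → ‖v x‖ ≤ K * Real.exp (-c * x) := by
  induction P, hP using induction_on_linear_factors generalizing v with
  | const a ha =>
    refine ⟨0, fun x hx => ?_⟩
    rw [mem_vanishingOnHalfLine_of_aeval_C_mem ha hv x hx, norm_zero, zero_mul]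
  | linear_mul z Q _ ih =>
    rw [forall_isRoot_X_sub_C_mul_iff] at hroots
    rw [mul_comm, aeval_mul_apply] at hv
    obtain ⟨K, hK⟩ := ih hroots.2 hv
    exact ⟨_, fun x hx => norm_le_mul_exp_of_aeval_X_sub_C hroots.1 hK hx⟩

theorem tendsto_zero_of_roots_im_pos {P : ℂ[X]} (hP : P ≠ 0) (hroots : ∀ z, P.IsRoot z → 0 < z.im)
    {v : smoothFunctions} (hv : aeval Dₙ P v ∈ vanishingOnHalfLine) : Tendsto v atTop (𝓝 0) := by
  obtain ⟨c, hroots_c, hc⟩ : ∃ c : ℝ, (∀ z ∈ P.roots.toFinset, c < z.im) ∧ 0 < c := by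
    have h : ∀ᶠ c : ℝ in 𝓝[>] 0, ∀ z ∈ P.roots.toFinset, c < z.im := by
      refine (Finset.eventually_all _).2 fun z hz => ?_
      exact nhdsWithin_le_nhds (Iio_mem_nhds (hroots z (by simpa [hP] using hz)))
    exact (h.and self_mem_nhdsWithin).exists
  obtain ⟨K, hK⟩ := exists_norm_le_mul_exp hP (fun z hz => hroots_c z (by simpa [hP] using hz)) hv
  have hexp : Tendsto (fun x : ℝ => K * Real.exp (-c * x)) atTop (𝓝 0) := by
    simpa using (Real.tendsto_exp_atBot.comp
      (tendsto_id.const_mul_atTop_of_neg (neg_neg_of_pos hc))).const_mul K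
  refine squeeze_zero_norm' ?_ hexp
  filter_upwards [eventually_ge_atTop 0] with x hx using hK x hx

/-- The translation `v ↦ v(· + 1)`. Unlike `D_n`, it visibly preserves decay at infinity. -/
def translation : Module.End ℂ smoothFunctions where
  toFun v := ⟨fun x => v (x + 1), (contDiff v).comp (contDiff_id.add contDiff_const)⟩
  map_add' _ _ := rfl
  map_smul' _ _ := rfl

theorem commute_Dₙ_translation : Commute Dₙ translation := by
  ext v x
  exact congrArg (-I * ·) (deriv_comp_add_const v 1 x)

theorem translation_sub_exp_smul_mem {z : ℂ} {v : smoothFunctions}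
    (hv : aeval Dₙ (X - C z) v ∈ vanishingOnHalfLine) :
    translation v - exp (I * z) • v ∈ vanishingOnHalfLine := by
  intro x hx
  change v (x + 1) - exp (I * z) * v x = 0
  rw [eq_exp_mul_of_aeval_X_sub_C_mem hv hx, eq_exp_mul_of_aeval_X_sub_C_mem hv (by positivity),
    ← mul_assoc, ← exp_add, sub_eq_zero]
  push_cast
  ring_nf

theorem mem_vanishingOnHalfLine_of_translation_sub_smul_mem {w : ℂ} (hw : 1 ≤ ‖w‖)
    {v : smoothFunctions} (hv : translation v - w • v ∈ vanishingOnHalfLine)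
    (hlim : Tendsto v atTop (𝓝 0)) : v ∈ vanishingOnHalfLine := by
  intro x hx
  have hiter (n : ℕ) : v (x + n) = w ^ n * v x := by
    induction n with
    | zero => simp
    | succ n ih =>
      have hstep : v (x + n + 1) = w * v (x + n) := sub_eq_zero.1 (hv (x + n) (by positivity))
      rw [Nat.cast_succ, ← add_assoc, hstep, ih, pow_succ', mul_assoc]
  have hle (n : ℕ) : ‖v x‖ ≤ ‖v (x + n)‖ := by
    rw [hiter, norm_mul, norm_pow]
    exact le_mul_of_one_le_left (norm_nonneg _) (one_le_pow₀ hw)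
  have hlim_nat : Tendsto (fun n : ℕ => ‖v (x + n)‖) atTop (𝓝 0) := by
    simpa using (hlim.comp (tendsto_atTop_add_const_left _ x tendsto_natCast_atTop_atTop)).norm
  exact norm_le_zero_iff.1 (ge_of_tendsto' hlim_nat hle)

theorem mem_vanishingOnHalfLine_of_roots_im_nonpos {P : ℂ[X]} (hP : P ≠ 0)
    (hroots : ∀ z, P.IsRoot z → z.im ≤ 0) {v : smoothFunctions}
    (hv : aeval Dₙ P v ∈ vanishingOnHalfLine) (hlim : Tendsto v atTop (𝓝 0)) :
    v ∈ vanishingOnHalfLine := by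
  induction P, hP using induction_on_linear_factors generalizing v with
  | const a ha => exact mem_vanishingOnHalfLine_of_aeval_C_mem ha hv
  | linear_mul z Q _ ih =>
    rw [forall_isRoot_X_sub_C_mul_iff] at hroots
    rw [aeval_mul_apply] at hv
    have hw : 1 ≤ ‖exp (I * z)‖ := by
      simpa [norm_exp] using hroots.1
    refine mem_vanishingOnHalfLine_of_translation_sub_smul_mem hw (ih hroots.2 ?_ ?_) hlim
    · rw [map_sub, map_smul, aeval_apply_comm_of_commute commute_Dₙ_translation]
      exact translation_sub_exp_smul_mem hv
    · have hshift : Tendsto (translation v) atTop (𝓝 0) :=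
        hlim.comp (tendsto_atTop_add_const_right _ 1 tendsto_id)
      have hlim_sub := hshift.sub (hlim.const_smul (exp (I * z)))
      rwa [smul_zero, sub_zero] at hlim_sub

theorem aeval_mul_mem_and_tendsto_zero_iff {U L : ℂ[X]} (hU : U ≠ 0) (hL : L ≠ 0)
    (hUroots : ∀ z, U.IsRoot z → 0 < z.im) (hLroots : ∀ z, L.IsRoot z → z.im ≤ 0)
    {v : smoothFunctions} :
    aeval Dₙ (U * L) v ∈ vanishingOnHalfLine ∧ Tendsto v atTop (𝓝 0) ↔
      aeval Dₙ U v ∈ vanishingOnHalfLine := by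
  constructor
  · rintro ⟨hv, hlim⟩
    have hcoprime : IsCoprime U L := by
      refine (isCoprime_iff_aeval_ne_zero_of_isAlgClosed (k := ℂ) ℂ U L).2 fun z => ?_
      by_contra! hz
      exact (hUroots z (by simpa using hz.1)).not_ge (hLroots z (by simpa using hz.2))
    obtain ⟨p, q, rfl, hp, hq⟩ :=
      exists_add_eq_of_isCoprime vanishingOnHalfLine_le_comap_Dₙ hcoprime hv
    have hqlim : Tendsto q atTop (𝓝 0) := by
      simpa using hlim.sub (tendsto_zero_of_roots_im_pos hU hUroots hp)
    rw [map_add]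
    exact add_mem hp (aeval_apply_smul_mem_of_le_comap
      (mem_vanishingOnHalfLine_of_roots_im_nonpos hL hLroots hq hqlim) _ _
      vanishingOnHalfLine_le_comap_Dₙ)
  · intro hv
    refine ⟨?_, tendsto_zero_of_roots_im_pos hU hUroots hv⟩
    rw [mul_comm]
    exact aeval_mul_mem vanishingOnHalfLine_le_comap_Dₙ _ hv

/-! ### The half-line problem -/

theorem bvpSol_mul_iff {m s : ℕ} {U L : ℂ[X]} (hU : U ≠ 0) (hL : L ≠ 0)
    (hUroots : ∀ z, U.IsRoot z → 0 < z.im) (hLroots : ∀ z, L.IsRoot z → z.im ≤ 0)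
    {h : Fin m → ℂ} {v : smoothFunctions} :
    BVPSol m s (U * L) h v ↔
      aeval Dₙ U v ∈ vanishingOnHalfLine ∧ ∀ j : Fin m, (Dₙ ^ (s + (j : ℕ))) v 0 = h j := by
  rw [← aeval_mul_mem_and_tendsto_zero_iff hU hL hUroots hLroots,
    mem_vanishingOnHalfLine_iff_forall_pos]
  simp only [BVPSol, polyOp_eq_aeval, ← Dₙ_pow_apply, contDiff v, true_and]
  tauto

end smoothFunctions

open smoothFunctions

theorem dirichlet_neumann_halfline_unique_solvability_general
    (m s : ℕ) (A : Polynomial ℂ) (hA : A ≠ 0)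
    (hrootsp : (A.roots.filter fun z => 0 < z.im).card = m) (h : Fin m → ℂ) :
    (∃ v : ℝ → ℂ, BVPSol m s A h v) ∧
    (∀ v w : ℝ → ℂ, BVPSol m s A h v → BVPSol m s A h w → EqOn v w (Ici 0)) := by
  obtain ⟨U, L, rfl, hdeg, hUroots, hLroots⟩ :=
    exists_mul_eq_and_forall_isRoot_of_splits (IsAlgClosed.splits A) hA fun z => 0 < z.im
  rw [hrootsp] at hdeg
  have hzero : ¬ U.IsRoot 0 := fun hz => (hUroots 0 hz).ne rfl
  have hsol {v : smoothFunctions} := bvpSol_mul_iff (s := s) (h := h) (v := v)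
    (left_ne_zero_of_mul hA) (right_ne_zero_of_mul hA) hUroots fun z hz => not_lt.1 (hLroots z hz)
  constructor
  · obtain ⟨v, hv, hvh⟩ := exists_aeval_eq_zero_and_shifted_initial_eq hzero s
      fun j => if hj : j < m then h ⟨j, hj⟩ else 0
    exact ⟨v, hsol.2 ⟨hv ▸ zero_mem _, fun j => by simp [hvh j (hdeg ▸ j.2)]⟩⟩
  · intro v w hv hw
    lift v to smoothFunctions using hv.1
    lift w to smoothFunctions using hw.1
    have hvw : v - w ∈ vanishingOnHalfLine := by
      refine mem_vanishingOnHalfLine_of_shifted_initial_eq_zero hzero s ?_ fun j hj => ?_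
      · rw [map_sub]
        exact sub_mem (hsol.1 hv).1 (hsol.1 hw).1
      · rw [map_sub]
        have hj : j < m := hdeg ▸ hj
        exact sub_eq_zero.2 (((hsol.1 hv).2 ⟨j, hj⟩).trans ((hsol.1 hw).2 ⟨j, hj⟩).symm)
    exact fun x hx => sub_eq_zero.1 (hvw x hx)

/-- For a properly elliptic polynomial `A` of degree `2m` (exactly `m` roots in
each open half-plane), the generalized Dirichlet (`s = 0`) and generalized Neumann (`s = m`)
half-line problems are uniquely solvable for arbitrary boundary data `h ∈ ℂ^m`
(uniqueness on `[0,∞)`). -/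
theorem dirichlet_neumann_halfline_unique_solvability
    (m : ℕ) (hm : 1 ≤ m) (A : Polynomial ℂ) (hdeg : A.natDegree = 2 * m)
    (hrootsp : (A.roots.filter fun z => 0 < z.im).card = m)
    (hrootsm : (A.roots.filter fun z => z.im < 0).card = m)
    (s : ℕ) (hs : s = 0 ∨ s = m) (h : Fin m → ℂ) :
    (∃ v : ℝ → ℂ, BVPSol m s A h v) ∧
    (∀ v w : ℝ → ℂ, BVPSol m s A h v → BVPSol m s A h w → EqOn v w (Ici 0)) :=
  dirichlet_neumann_halfline_unique_solvability_general m s A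
    (ne_zero_of_natDegree_gt (n := 0) (by omega)) hrootsp h
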